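/- Let n, M ≥ 1 be integers and let θ be an n×n matrix with nonnegative real entries such that ∏_{i} θ(i,σ(i)) > 0 for at least one permutation σ ∈ S_n, and let p_θ(σ) = (∏_i θ(i,σ(i)))/perm(θ) for σ ∈ S_n. Then perm(θ)/perm_{B,M}(θ) = ( Σ_{(σ_1,…,σ_M) ∈ (S_n)^M} (∏_{m=1}^M p_θ(σ_m)) · C_{B,M,n}(k)/C_{M,n}(k) )^{−1/M}, where k = Σ_{m=1}^M P_{σ_m} ∈ K(M,n) (note C_{M,n}(k) ≥ 1 for such k, so the ratio is well defined) and perm_{B,M}(θ) = ⟨perm(θ↑P_M)⟩^{1/M}. -/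

import Mathlib

open scoped BigOperators

noncomputable section

/-- The permanent of a real square matrix: `perm(A) = Σ_{σ} ∏_i A(i, σ(i))`. -/
def perm' {α : Type*} [Fintype α] [DecidableEq α] (A : Matrix α α ℝ) : ℝ :=
  ∑ σ : Equiv.Perm α, ∏ i, A i (σ i)

/-- The permutation matrix `P_σ` with entries `P_σ(i,j) = 1` iff `σ(i) = j`. -/
def permMat {n : ℕ} (σ : Equiv.Perm (Fin n)) : Matrix (Fin n) (Fin n) ℕ :=
  Matrix.of fun i j => if σ i = j then 1 else 0

/-- `k ∈ K(M,n)`: a nonnegative-integer `n×n` matrix all of whose row sums and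
column sums equal `M`. -/
def isDS (M n : ℕ) (k : Matrix (Fin n) (Fin n) ℕ) : Prop :=
  (∀ i, ∑ j, k i j = M) ∧ (∀ j, ∑ i, k i j = M)

/-- `C_{M,n}(k)`: the number of `M`-tuples `(σ_1,…,σ_M)` of permutations of `{1,…,n}`
with `Σ_m P_{σ_m} = k`. -/
def Ccoef (M n : ℕ) (k : Matrix (Fin n) (Fin n) ℕ) : ℕ :=
  Nat.card {σs : Fin M → Equiv.Perm (Fin n) // (∑ m, permMat (σs m)) = k}

/-- `C_{B,M,n}(k) = (M!)^{2n} · (∏_{i,j} (M−k(i,j))!) / ((M!)^{n²} · ∏_{i,j} k(i,j)!)`. -/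
def CB (M n : ℕ) (k : Matrix (Fin n) (Fin n) ℕ) : ℝ :=
  ((M.factorial : ℝ) ^ (2 * n) * ∏ i, ∏ j, ((M - k i j).factorial : ℝ)) /
    ((M.factorial : ℝ) ^ (n ^ 2) * ∏ i, ∏ j, ((k i j).factorial : ℝ))

/-- The `P_M`-lifting `θ↑P_M`: the `nM×nM` matrix with entries
`(θ↑P_M)((i,m),(j,m')) = θ(i,j)·P^{(i,j)}(m,m')`. -/
def liftMat {n M : ℕ} (θ : Matrix (Fin n) (Fin n) ℝ)
    (P : Fin n → Fin n → Equiv.Perm (Fin M)) :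
    Matrix (Fin n × Fin M) (Fin n × Fin M) ℝ :=
  Matrix.of fun p q => θ p.1 q.1 * (if P p.1 q.1 p.2 = q.2 then 1 else 0)

/-- `⟨perm(θ↑P_M)⟩`: the arithmetic average of `perm(θ↑P_M)` over all `(M!)^{n²}`
collections `P_M` of `n²` permutation matrices of size `M×M`. -/
def avgLiftPerm (n M : ℕ) (θ : Matrix (Fin n) (Fin n) ℝ) : ℝ :=
  (∑ P : Fin n → Fin n → Equiv.Perm (Fin M), perm' (liftMat θ P)) /
    (Fintype.card (Fin n → Fin n → Equiv.Perm (Fin M)) : ℝ)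

open Finset in
theorem card_perm_comp_eq {α β : Type*} [Fintype α] [DecidableEq α] [Fintype β] [DecidableEq β]
    (f₀ f : α → β) (h : ∀ c, #{a | f a = c} = #{a | f₀ a = c}) :
    #{g : Equiv.Perm α | f₀ ∘ g = f} = ∏ c, (#{a | f₀ a = c}).factorial := by
  have e : ∀ c, Nonempty ({a // f a = c} ≃ {a // f₀ a = c}) := fun c => by
    rw [← Fintype.card_eq, Fintype.card_subtype, Fintype.card_subtype, h]
  have hg₁ : f₀ ∘ (Equiv.ofFiberEquiv fun c => Classical.choice (e c)) = f :=
    funext fun a => Equiv.ofFiberEquiv_map _ a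
  generalize (Equiv.ofFiberEquiv fun c => Classical.choice (e c)) = g₁ at hg₁
  have hs := DomMulAct.stabilizer_card f₀
  simp only [Fintype.card_subtype] at hs
  rw [← hs]
  refine card_equiv (Equiv.mulRight g₁⁻¹) fun g => ?_
  simp only [mem_filter, mem_univ, true_and, Equiv.coe_mulRight, Equiv.Perm.coe_mul]
  subst hg₁
  constructor
  · intro hg
    rw [← Function.comp_assoc, hg]
    ext a
    simp
  · intro hg
    conv_rhs => rw [← hg]
    ext a
    simp

open Finset in
theorem card_fun_with_fiber_card {α β : Type*} [Fintype α] [DecidableEq α] [Fintype β]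
    [DecidableEq β] (k : β → ℕ) (hk : ∑ c, k c = Fintype.card α) :
    #{f : α → β | ∀ c, #{a | f a = c} = k c} * ∏ c, (k c).factorial
      = (Fintype.card α).factorial := by
  obtain ⟨e⟩ : Nonempty (α ≃ Σ c, Fin (k c)) := by
    rw [← Fintype.card_eq]; simp [hk]
  have hf₀ : ∀ c, #{a | (e a).1 = c} = k c := fun c => by
    rw [← Fintype.card_subtype,
      Fintype.card_congr (e.subtypeEquiv (q := fun x => x.1 = c) fun a => Iff.rfl),
      Fintype.card_congr (Equiv.sigmaSubtype c), Fintype.card_fin]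
  rw [← Fintype.card_perm, ← card_univ,
    card_eq_sum_card_fiberwise (f := fun g : Equiv.Perm α => (fun a => (e a).1) ∘ g)
      (t := {f : α → β | ∀ c, #{a | f a = c} = k c})]
  · rw [← smul_eq_mul, ← sum_const]
    refine sum_congr rfl fun f hf => ?_
    rw [card_perm_comp_eq]
    · simp only [hf₀]
    · intro c
      rw [hf₀, (mem_filter.1 hf).2]
  · intro g _
    simp only [coe_filter, mem_univ, true_and, Set.mem_ofPred_eq, Function.comp_apply]
    intro c
    rw [← hf₀ c]
    exact card_equiv g fun a => by simp

open Finset in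
theorem card_perm_extending {β : Type*} [Fintype β] [DecidableEq β] (S : Finset β) (h : β → β)
    (hh : Set.InjOn h S) :
    #{P : Equiv.Perm β | ∀ a ∈ S, P a = h a} = (Fintype.card β - #S).factorial := by
  obtain ⟨g, hg⟩ := exists_equiv_extend_of_card_eq (t := (univ : Finset β)) (by simp)
    (subset_univ _) hh
  have hgu : ∃ g' : Equiv.Perm β, ∀ a ∈ S, g' a = h a :=
    ⟨g.trans (Equiv.subtypeUnivEquiv fun x => mem_univ x), fun a ha => hg a ha⟩
  obtain ⟨g', hg'⟩ := hgu
  have key := Fintype.card_congr (Equiv.Perm.subtypeEquivSubtypePerm fun a => a ∉ S)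
  rw [Fintype.card_perm, Fintype.card_subtype_compl, Fintype.card_coe] at key
  rw [key, Fintype.card_subtype]
  refine card_equiv (Equiv.mulLeft g'⁻¹) fun P => ?_
  simp only [mem_filter, mem_univ, true_and, Equiv.coe_mulLeft, not_not, Equiv.Perm.coe_mul,
    Function.comp_apply, Equiv.Perm.inv_eq_iff_eq]
  exact forall₂_congr fun a ha => by rw [hg' a ha]

/-- For `τ ∈ S_{n × M}`, the number of points of block `i` which `τ` sends to block `j`. -/
def blockCount {n M : ℕ} (τ : Equiv.Perm (Fin n × Fin M)) : Fin n → Fin n → ℕ :=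
  fun i j => (Finset.univ.filter fun m => (τ (i, m)).1 = j).card

open Finset in
theorem sum_card_row_filter {n M : ℕ} (f : Fin n × Fin M → Fin n) (j : Fin n) :
    ∑ i, #{m | f (i, m) = j} = #{p | f p = j} := by
  simp only [card_filter, Fintype.sum_prod_type]

open Finset in
theorem card_fst_filter {n M : ℕ} (j : Fin n) : #{p : Fin n × Fin M | p.1 = j} = M := by
  rw [← sum_card_row_filter]
  simp [filter_const, apply_ite card]

open Finset in
theorem isDS_blockCount {n M : ℕ} (τ : Equiv.Perm (Fin n × Fin M)) :
    isDS M n (Matrix.of (blockCount τ)) := by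
  constructor
  · intro i
    have := card_eq_sum_card_fiberwise (s := (univ : Finset (Fin M)))
      (f := fun m => (τ (i, m)).1) (t := univ) (fun _ _ => by simp)
    simpa [blockCount] using this.symm
  · intro j
    simp only [blockCount, Matrix.of_apply]
    rw [sum_card_row_filter fun p => (τ p).1]
    refine Eq.trans ?_ (card_fst_filter (M := M) j)
    exact card_equiv τ fun a => by simp

open Finset in
theorem card_blockCount_eq {n M : ℕ} (k : Fin n → Fin n → ℕ)
    (hrow : ∀ i, ∑ j, k i j = M) (hcol : ∀ j, ∑ i, k i j = M) :
    #{τ : Equiv.Perm (Fin n × Fin M) | blockCount τ = k} * ∏ i, ∏ j, (k i j).factorial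
      = M.factorial ^ (2 * n) := by
  have hF : #{f : Fin n × Fin M → Fin n | ∀ i j, #{m | f (i, m) = j} = k i j}
      * ∏ i, ∏ j, (k i j).factorial = M.factorial ^ n := by
    have : #{f : Fin n × Fin M → Fin n | ∀ i j, #{m | f (i, m) = j} = k i j}
        = ∏ i, #{f : Fin M → Fin n | ∀ j, #{m | f m = j} = k i j} := by
      rw [← Fintype.card_piFinset]
      exact card_equiv (Equiv.curry _ _ _) fun f => by
        simp only [mem_filter, mem_univ, true_and, Fintype.mem_piFinset, Equiv.curry_apply,
          Function.curry_apply]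
        exact Iff.rfl
    have hi : ∀ i, #{f : Fin M → Fin n | ∀ j, #{m | f m = j} = k i j} *
        ∏ j, (k i j).factorial = M.factorial := fun i => by
      convert card_fun_with_fiber_card (α := Fin M) (k i) (by simpa using hrow i)
      simp
    rw [this, ← prod_mul_distrib, prod_congr rfl fun i _ => hi i]
    simp
  rw [card_eq_sum_card_fiberwise (f := fun τ : Equiv.Perm (Fin n × Fin M) => Prod.fst ∘ τ)
    (t := {f : Fin n × Fin M → Fin n | ∀ i j, #{m | f (i, m) = j} = k i j})]
  · rw [two_mul, pow_add]
    nth_rw 1 [← hF]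
    rw [mul_right_comm, ← smul_eq_mul (#_), ← sum_const]
    congr 1
    refine sum_congr rfl fun f hf => ?_
    have hf' := (mem_filter.1 hf).2
    have hfil : #{g : Equiv.Perm (Fin n × Fin M) | Prod.fst ∘ g = f} = M.factorial ^ n := by
      rw [card_perm_comp_eq]
      · simp [card_fst_filter]
      · intro c
        rw [card_fst_filter, ← sum_card_row_filter]
        exact (sum_congr rfl fun i _ => hf' i c).trans (hcol c)
    rw [← hfil, filter_filter]
    congr 1
    refine filter_congr fun τ _ => ⟨fun h => h.2, fun h => ⟨?_, h⟩⟩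
    subst h
    exact funext₂ hf'
  · intro τ hτ
    simp only [coe_filter, mem_univ, true_and, Set.mem_ofPred_eq] at hτ ⊢
    subst hτ
    intro i j
    rfl

open Finset in
theorem sum_perm'_liftMat {n M : ℕ} (θ : Matrix (Fin n) (Fin n) ℝ) :
    ∑ P : Fin n → Fin n → Equiv.Perm (Fin M), perm' (liftMat θ P) =
      ∑ τ : Equiv.Perm (Fin n × Fin M), (∏ i, ∏ j, θ i j ^ blockCount τ i j) *
        ∏ i, ∏ j, ((M - blockCount τ i j).factorial : ℝ) := by
  simp only [perm', liftMat, Matrix.of_apply]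
  rw [sum_comm]
  refine sum_congr rfl fun τ _ => ?_
  simp only [prod_mul_distrib, prod_boole, ← mul_sum]
  congr 1
  · rw [Fintype.prod_prod_type]
    refine prod_congr rfl fun i _ => ?_
    rw [← prod_fiberwise (univ : Finset (Fin M)) (fun m => (τ (i, m)).1)]
    refine prod_congr rfl fun j _ => ?_
    rw [prod_congr rfl (g := fun _ => θ i j) fun m hm => by rw [(mem_filter.1 hm).2], prod_const]
    rfl
  · have h : ∀ i j, #{P : Equiv.Perm (Fin M) | ∀ m ∈ ({m | (τ (i, m)).1 = j} : Finset (Fin M)),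
        P m = (τ (i, m)).2} = (M - blockCount τ i j).factorial := fun i j => by
      have := card_perm_extending ({m | (τ (i, m)).1 = j} : Finset (Fin M))
        (fun m => (τ (i, m)).2) fun a ha b hb hab => by
          simp only [coe_filter, mem_univ, true_and, Set.mem_ofPred_eq] at ha hb
          exact (Prod.ext_iff.1 (τ.injective (Prod.ext (ha.trans hb.symm) hab))).2
      rw [Fintype.card_fin] at this
      rw [blockCount]
      convert this
    simp only [← h]
    norm_cast
    simp only [← Fintype.card_piFinset]
    rw [sum_boole, Nat.cast_id]
    congr 1
    ext P
    simp only [mem_filter, mem_univ, true_and, true_imp_iff, Fintype.mem_piFinset, Prod.forall]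
    exact ⟨fun h i j m hm => hm ▸ h i m, fun h i m => h i _ m rfl⟩

theorem isDS_permMat {n : ℕ} (σ : Equiv.Perm (Fin n)) : isDS 1 n (permMat σ) := by
  refine ⟨fun i => by simp [permMat], fun j => ?_⟩
  have : ∀ i, (σ i = j) ↔ i = σ.symm j := fun i => by rw [Equiv.eq_symm_apply]
  simp [permMat, this]

theorem isDS_sum_permMat {n M : ℕ} (σs : Fin M → Equiv.Perm (Fin n)) :
    isDS M n (∑ m, permMat (σs m)) := by
  constructor
  · intro i
    simp only [Matrix.sum_apply]
    rw [Finset.sum_comm]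
    simp [(isDS_permMat _).1 i]
  · intro j
    simp only [Matrix.sum_apply]
    rw [Finset.sum_comm]
    simp [(isDS_permMat _).2 j]

theorem exists_perm_pos_of_isDS {n M : ℕ} (k : Matrix (Fin n) (Fin n) ℕ)
    (hk : isDS (M + 1) n k) : ∃ σ : Equiv.Perm (Fin n), ∀ i, 0 < k i (σ i) := by
  have hM : ((M : ℝ) + 1) ≠ 0 := by positivity
  have hA : (Matrix.of fun i j => (k i j : ℝ) / (M + 1)) ∈ doublyStochastic ℝ (Fin n) := by
    rw [mem_doublyStochastic_iff_sum]
    refine ⟨fun i j => by simp only [Matrix.of_apply]; positivity, fun i => ?_, fun j => ?_⟩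
    · simp only [Matrix.of_apply, ← Finset.sum_div]
      rw [div_eq_one_iff_eq hM]
      exact_mod_cast hk.1 i
    · simp only [Matrix.of_apply, ← Finset.sum_div]
      rw [div_eq_one_iff_eq hM]
      exact_mod_cast hk.2 j
  obtain ⟨w, hw0, hw1, hw⟩ := exists_eq_sum_perm_of_mem_doublyStochastic hA
  obtain ⟨σ, -, hσ⟩ : ∃ σ ∈ Finset.univ, 0 < w σ :=
    Finset.exists_lt_of_sum_lt (f := fun _ => (0 : ℝ)) (by simp [hw1])
  refine ⟨σ, fun i => Nat.pos_of_ne_zero fun h0 => ?_⟩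
  have h1 := congr_fun (congr_fun hw i) (σ i)
  simp only [Matrix.sum_apply, Matrix.smul_apply, Matrix.of_apply, h0] at h1
  have h2 : w σ ≤ ∑ ρ, w ρ • Equiv.Perm.permMatrix ℝ ρ i (σ i) := by
    refine le_trans (le_of_eq ?_) (Finset.single_le_sum
      (f := fun ρ => w ρ • Equiv.Perm.permMatrix ℝ ρ i (σ i)) (fun ρ _ => ?_) (Finset.mem_univ σ))
    · simp [Equiv.Perm.permMatrix, PEquiv.toMatrix_apply]
    · refine mul_nonneg (hw0 ρ) ?_
      exact nonneg_of_mem_doublyStochastic permMatrix_mem_doublyStochastic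
  simp at h1 h2
  linarith

theorem exists_sum_permMat_of_isDS {n M : ℕ} (k : Matrix (Fin n) (Fin n) ℕ) (hk : isDS M n k) :
    ∃ σs : Fin M → Equiv.Perm (Fin n), ∑ m, permMat (σs m) = k := by
  induction M generalizing k with
  | zero =>
    refine ⟨Fin.elim0, ?_⟩
    ext i j
    have := (Finset.sum_eq_zero_iff.1 (hk.1 i)) j (Finset.mem_univ j)
    simp [this]
  | succ M ih =>
    obtain ⟨σ, hσ⟩ := exists_perm_pos_of_isDS k hk
    have hle : ∀ i j, permMat σ i j ≤ k i j := fun i j => by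
      simp only [permMat, Matrix.of_apply]
      split_ifs with h
      · exact h ▸ hσ i
      · exact Nat.zero_le _
    have hadd : k = permMat σ + Matrix.of fun i j => k i j - permMat σ i j := by
      ext i j
      have := hle i j
      simp only [Matrix.add_apply, Matrix.of_apply]
      omega
    generalize (Matrix.of fun i j => k i j - permMat σ i j) = k' at hadd
    subst hadd
    have hk' : isDS M n k' := by
      refine ⟨fun i => ?_, fun j => ?_⟩
      · have h1 := hk.1 i
        simp only [Matrix.add_apply, Finset.sum_add_distrib, (isDS_permMat σ).1 i] at h1
        omega
      · have h1 := hk.2 j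
        simp only [Matrix.add_apply, Finset.sum_add_distrib, (isDS_permMat σ).2 j] at h1
        omega
    obtain ⟨σs, hσs⟩ := ih k' hk'
    exact ⟨Fin.cons σ σs, by simp [Fin.sum_univ_succ, hσs]⟩

theorem prod_prod_perm_eq {n M : ℕ} (θ : Matrix (Fin n) (Fin n) ℝ)
    (σs : Fin M → Equiv.Perm (Fin n)) :
    ∏ m, ∏ i, θ i (σs m i) = ∏ i, ∏ j, θ i j ^ (∑ m, permMat (σs m)) i j := by
  rw [Finset.prod_comm]
  refine Finset.prod_congr rfl fun i _ => ?_
  simp only [Matrix.sum_apply, ← Finset.prod_pow_eq_pow_sum]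
  rw [Finset.prod_comm]
  refine Finset.prod_congr rfl fun m _ => ?_
  simp [permMat]

open Finset in
theorem Ccoef_eq_card {n M : ℕ} (k : Matrix (Fin n) (Fin n) ℕ) :
    Ccoef M n k = #{σs : Fin M → Equiv.Perm (Fin n) | ∑ m, permMat (σs m) = k} := by
  rw [Ccoef, Nat.card_eq_fintype_card, Fintype.card_subtype]

open Finset in
/-- The average lifted permanent as a sum over tuples of permutations. -/
theorem avgLiftPerm_eq_sum (n M : ℕ) (θ : Matrix (Fin n) (Fin n) ℝ) :
    avgLiftPerm n M θ = ∑ σs : Fin M → Equiv.Perm (Fin n), (∏ m, ∏ i, θ i (σs m i)) *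
      (CB M n (∑ m, permMat (σs m)) / (Ccoef M n (∑ m, permMat (σs m)) : ℝ)) := by
  set K : Finset (Matrix (Fin n) (Fin n) ℕ) :=
    univ.image fun σs : Fin M → Equiv.Perm (Fin n) => ∑ m, permMat (σs m)
  have hKds : ∀ k ∈ K, isDS M n k := fun k hk => by
    obtain ⟨σs, -, rfl⟩ := mem_image.1 hk
    exact isDS_sum_permMat σs
  have hdsK : ∀ k, isDS M n k → k ∈ K := fun k hk => by
    obtain ⟨σs, rfl⟩ := exists_sum_permMat_of_isDS k hk
    exact mem_image_of_mem _ (mem_univ _)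
  rw [avgLiftPerm, sum_perm'_liftMat, ← sum_fiberwise_of_maps_to (t := K)
    (g := fun τ : Equiv.Perm (Fin n × Fin M) => Matrix.of (blockCount τ))
    (fun τ _ => hdsK _ (isDS_blockCount τ)), sum_div]
  conv_rhs => rw [← sum_fiberwise_of_maps_to (t := K)
    (g := fun σs : Fin M → Equiv.Perm (Fin n) => ∑ m, permMat (σs m))
    (fun σs _ => mem_image_of_mem _ (mem_univ _))]
  refine sum_congr rfl fun k hk => ?_
  have hl : ∀ τ ∈ ({τ | Matrix.of (blockCount τ) = k} : Finset (Equiv.Perm (Fin n × Fin M))),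
      (∏ i, ∏ j, θ i j ^ blockCount τ i j) * ∏ i, ∏ j, ((M - blockCount τ i j).factorial : ℝ) =
        (∏ i, ∏ j, θ i j ^ k i j) * ∏ i, ∏ j, ((M - k i j).factorial : ℝ) := fun τ hτ => by
    rw [← (mem_filter.1 hτ).2]
    rfl
  have hr : ∀ σs ∈ ({σs | ∑ m, permMat (σs m) = k} : Finset (Fin M → Equiv.Perm (Fin n))),
      (∏ m, ∏ i, θ i (σs m i)) *
        (CB M n (∑ m, permMat (σs m)) / (Ccoef M n (∑ m, permMat (σs m)) : ℝ)) =
        (∏ i, ∏ j, θ i j ^ k i j) * (CB M n k / (Ccoef M n k : ℝ)) := fun σs hσs => by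
    rw [prod_prod_perm_eq, (mem_filter.1 hσs).2]
  rw [sum_congr rfl hl, sum_congr rfl hr, sum_const, sum_const, ← Ccoef_eq_card]
  have hC : (Ccoef M n k : ℝ) ≠ 0 := by
    obtain ⟨σs, -, h⟩ := mem_image.1 hk
    rw [Ccoef_eq_card, Nat.cast_ne_zero]
    exact (card_pos.2 ⟨σs, by simpa using h⟩).ne'
  have hB : ((#{τ : Equiv.Perm (Fin n × Fin M) | Matrix.of (blockCount τ) = k} : ℕ) : ℝ) *
      ∏ i, ∏ j, ((k i j).factorial : ℝ) = (M.factorial : ℝ) ^ (2 * n) := by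
    exact_mod_cast card_blockCount_eq (fun i j => k i j) (hKds k hk).1 (hKds k hk).2
  have hkf : ∏ i, ∏ j, ((k i j).factorial : ℝ) ≠ 0 :=
    prod_ne_zero_iff.2 fun i _ => prod_ne_zero_iff.2 fun j _ =>
      Nat.cast_ne_zero.2 (Nat.factorial_ne_zero _)
  have hMf : (M.factorial : ℝ) ≠ 0 := Nat.cast_ne_zero.2 (Nat.factorial_ne_zero _)
  have hcard : (Fintype.card (Fin n → Fin n → Equiv.Perm (Fin M)) : ℝ)
      = (M.factorial : ℝ) ^ (n ^ 2) := by
    simp [Fintype.card_perm, sq, pow_mul]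
  rw [hcard, CB, ← hB]
  simp only [nsmul_eq_mul]
  field_simp

/-- For `n, M ≥ 1` and a nonnegative `n×n` matrix `θ` having a permutation
of positive weight, with `p_θ(σ) = (∏_i θ(i,σ(i)))/perm(θ)`:
`perm(θ)/perm_{B,M}(θ)
  = (Σ_{(σ_1,…,σ_M)} (∏_m p_θ(σ_m)) · C_{B,M,n}(k)/C_{M,n}(k))^{−1/M}`,
where `k = Σ_m P_{σ_m}` and `perm_{B,M}(θ) = ⟨perm(θ↑P_M)⟩^{1/M}`. -/
theorem statement_15 (n M : ℕ) (hn : 1 ≤ n) (hM : 1 ≤ M)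
    (θ : Matrix (Fin n) (Fin n) ℝ) (hθ : ∀ i j, 0 ≤ θ i j)
    (hex : ∃ σ : Equiv.Perm (Fin n), 0 < ∏ i, θ i (σ i)) :
    perm' θ / (avgLiftPerm n M θ) ^ (1 / (M : ℝ)) =
      (∑ σs : Fin M → Equiv.Perm (Fin n),
          (∏ m, (∏ i, θ i (σs m i)) / perm' θ) *
            (CB M n (∑ m, permMat (σs m)) / (Ccoef M n (∑ m, permMat (σs m)) : ℝ))) ^
        (-(1 / (M : ℝ))) := by
  have hperm : 0 < perm' θ := by
    obtain ⟨σ, hσ⟩ := hex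
    exact Finset.sum_pos' (fun τ _ => Finset.prod_nonneg fun i _ => hθ _ _)
      ⟨σ, Finset.mem_univ _, hσ⟩
  have hsum : (∑ σs : Fin M → Equiv.Perm (Fin n),
          (∏ m, (∏ i, θ i (σs m i)) / perm' θ) *
            (CB M n (∑ m, permMat (σs m)) / (Ccoef M n (∑ m, permMat (σs m)) : ℝ))) =
      avgLiftPerm n M θ / perm' θ ^ M := by
    rw [avgLiftPerm_eq_sum, Finset.sum_div]
    refine Finset.sum_congr rfl fun σs _ => ?_
    rw [Finset.prod_div_distrib, Finset.prod_const, Finset.card_univ, Fintype.card_fin,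
      div_mul_eq_mul_div]
  have havg : 0 ≤ avgLiftPerm n M θ := by
    rw [avgLiftPerm, sum_perm'_liftMat]
    refine div_nonneg (Finset.sum_nonneg fun τ _ => mul_nonneg ?_ ?_) (Nat.cast_nonneg _)
    · exact Finset.prod_nonneg fun i _ => Finset.prod_nonneg fun j _ => pow_nonneg (hθ i j) _
    · exact Finset.prod_nonneg fun i _ => Finset.prod_nonneg fun j _ => Nat.cast_nonneg _
  have hroot : (perm' θ ^ M) ^ (1 / (M : ℝ)) = perm' θ := by
    rw [one_div]
    exact Real.pow_rpow_inv_natCast hperm.le (by omega)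
  rw [hsum, Real.rpow_neg (div_nonneg havg (pow_nonneg hperm.le _)),
    Real.div_rpow havg (pow_nonneg hperm.le _), hroot, inv_div]
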